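/- Let μ be a finite Borel measure on E = [0,∞], let γ > 0, and let f : E → [0,∞) be bounded Borel measurable. Then ∫₀^∞ e^{−γr − ⟨k_rμ, f⟩} (γ − f(H^μ_r)) dr = e^{−⟨μ,f⟩} − (f(0)/γ) e^{−γ⟨μ,1⟩}, where ⟨ν,f⟩ = ∫_E f dν. -/

import Mathlib

/-!
Let `M = μ E` and let `c r = eraseCut μ r` be the point where `μ` is cut after erasing mass `r`.
The cut point is a quantile: `c r ≤ s` exactly when `M - r ≤ μ [0,s]` (`eraseCut_le_iff`).
Two facts follow. Comparing distribution functions, `k_r μ` is the image of Lebesgue measure on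
`(r, M]` under `c` (`eraseMass_eq_map`), so that `⟨k_r μ, f⟩ = ∫_r^M f (c u) du`. Moreover the
supremum of the support of `k_r μ` is `c r` (`Hr_eq_eraseCut`), so that
`P r = γ r - ∫_0^r f (c u) du` has derivative `γ - f (H^μ_r)` at almost every `r < M`.

On `(0, M]` the integrand is therefore `e^{-⟨μ,f⟩} e^{-P} P'`, whose integral is
`e^{-⟨μ,f⟩} - e^{-γ M}` (`integral_exp_neg_primitive_mul`). On `(M, ∞)` the erased measure is `0`
and the integrand is `e^{-γ r} (γ - f 0)`, which contributes `(1 - f 0 / γ) e^{-γ M}`.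
-/

open MeasureTheory Set Filter Topology ENNReal

noncomputable section

/-- `mH ν` is the supremum of the closed support of a Borel measure `ν` on `E = [0,∞]`
(a point is in the support iff every open neighbourhood has positive measure),
with the convention `sSup ∅ = 0`. -/
def mH (ν : Measure ℝ≥0∞) : ℝ≥0∞ :=
  sSup {x : ℝ≥0∞ | ∀ U : Set ℝ≥0∞, IsOpen U → x ∈ U → 0 < ν U}

/-- The point at which the erased measure `k_a ν` is cut. -/
def eraseCut (ν : Measure ℝ≥0∞) (a : ℝ≥0∞) : ℝ≥0∞ :=
  sInf {s : ℝ≥0∞ | ν Set.univ - a ≤ ν (Set.Iic s)}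

/-- The erased measure `k_a ν` : the measure `ν` erased by mass `a` backward from the top.
For a finite measure `ν` it is the unique finite measure satisfying
`eraseMass a ν (Set.Iic s) = min (ν (Set.Iic s)) (ν Set.univ - a)` for all `s`;
in particular it is `0` as soon as `a ≥ ν Set.univ`. -/
def eraseMass (a : ℝ≥0∞) (ν : Measure ℝ≥0∞) : Measure ℝ≥0∞ :=
  ν.restrict (Set.Iio (eraseCut ν a)) +
    (ν Set.univ - a - ν (Set.Iio (eraseCut ν a))) • Measure.dirac (eraseCut ν a)

/-- `Hr ν r = H^ν_r = H^{k_r ν}`, the height of the measure `ν` erased by mass `r`. -/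
def Hr (ν : Measure ℝ≥0∞) (r : ℝ≥0∞) : ℝ≥0∞ := mH (eraseMass r ν)

/-- Right continuity of `s ↦ ν [0,s]`: the infimum defining the cut point is attained. -/
lemma le_measure_Iic_eraseCut (ν : Measure ℝ≥0∞) [IsFiniteMeasure ν] (a : ℝ≥0∞) :
    ν univ - a ≤ ν (Iic (eraseCut ν a)) := by
  rcases eq_or_ne (eraseCut ν a) ⊤ with h | h
  · rw [h, Iic_top]; exact tsub_le_self
  obtain ⟨u, hu, hmem, hlim⟩ := exists_seq_strictAnti_tendsto' (lt_top_iff_ne_top.2 h)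
  have hI : ⋂ n, Iic (u n) = Iic (eraseCut ν a) := by
    ext x
    simp only [mem_iInter, mem_Iic]
    exact ⟨fun hx => ge_of_tendsto' hlim hx, fun hx n => hx.trans (hmem n).1.le⟩
  have ht := tendsto_measure_iInter_atTop (μ := ν) (s := fun n => Iic (u n))
    (fun n => measurableSet_Iic.nullMeasurableSet)
    (fun m n hmn => Iic_subset_Iic.2 (hu.antitone hmn)) ⟨0, measure_ne_top _ _⟩
  rw [hI] at ht
  refine ge_of_tendsto' ht fun n => ?_
  obtain ⟨s, hs, hsu⟩ := sInf_lt_iff.1 (hmem n).1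
  exact hs.trans (measure_mono (Iic_subset_Iic.2 hsu.le))

/-- The cut point is the generalized inverse (quantile function) of `s ↦ ν [0,s]`. -/
lemma eraseCut_le_iff (ν : Measure ℝ≥0∞) [IsFiniteMeasure ν] (a s : ℝ≥0∞) :
    eraseCut ν a ≤ s ↔ ν univ - a ≤ ν (Iic s) :=
  ⟨fun h => (le_measure_Iic_eraseCut ν a).trans (measure_mono (Iic_subset_Iic.2 h)),
    fun h => sInf_le h⟩

lemma measure_Iio_eraseCut_le (ν : Measure ℝ≥0∞) [IsFiniteMeasure ν] (a : ℝ≥0∞) :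
    ν (Iio (eraseCut ν a)) ≤ ν univ - a := by
  rcases eq_or_ne (eraseCut ν a) 0 with h | h
  · simp [h]
  obtain ⟨u, hu, hmem, hlim⟩ := exists_seq_strictMono_tendsto' (pos_iff_ne_zero.2 h)
  have hI := iUnion_Iic_eq_Iio_of_lt_of_tendsto (fun n => (hmem n).2) hlim
  have ht := tendsto_measure_iUnion_atTop (μ := ν) (s := fun n => Iic (u n))
    (fun m n hmn => Iic_subset_Iic.2 (hu.monotone hmn))
  rw [hI] at ht
  refine le_of_tendsto' ht fun n => ?_
  exact (not_le.1 fun hc => (hmem n).2.not_ge ((eraseCut_le_iff ν a _).2 hc)).le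

/-- `k_a ν [0,s] = min (ν [0,s]) (ν E - a)`, the defining property of the erased measure. -/
lemma eraseMass_Iic (ν : Measure ℝ≥0∞) [IsFiniteMeasure ν] (a s : ℝ≥0∞) :
    eraseMass a ν (Iic s) = min (ν (Iic s)) (ν univ - a) := by
  rw [eraseMass, Measure.add_apply, Measure.restrict_apply measurableSet_Iic,
    Measure.smul_apply, Measure.dirac_apply' _ measurableSet_Iic]
  by_cases h : eraseCut ν a ≤ s
  · have h1 : Iic s ∩ Iio (eraseCut ν a) = Iio (eraseCut ν a) :=
      inter_eq_right.2 fun x hx => (le_of_lt hx).trans h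
    rw [h1, indicator_of_mem (mem_Iic.2 h), min_eq_right ((eraseCut_le_iff ν a s).1 h)]
    simp [add_tsub_cancel_of_le (measure_Iio_eraseCut_le ν a)]
  · have h1 : Iic s ∩ Iio (eraseCut ν a) = Iic s :=
      inter_eq_left.2 fun x hx => lt_of_le_of_lt hx (not_le.1 h)
    rw [h1, indicator_of_notMem (by simpa using h),
      min_eq_left (not_le.1 (mt (eraseCut_le_iff ν a s).2 h)).le]
    simp

lemma eraseMass_univ (ν : Measure ℝ≥0∞) [IsFiniteMeasure ν] (a : ℝ≥0∞) :
    eraseMass a ν univ = ν univ - a := by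
  rw [← Iic_top, eraseMass_Iic, Iic_top, min_eq_right tsub_le_self]

lemma eraseCut_antitone (ν : Measure ℝ≥0∞) [IsFiniteMeasure ν] : Antitone (eraseCut ν) :=
  fun a b hab => (eraseCut_le_iff ν b _).2
    ((tsub_le_tsub_left hab _).trans (le_measure_Iic_eraseCut ν a))

lemma measurable_eraseCut_ofReal (ν : Measure ℝ≥0∞) [IsFiniteMeasure ν] :
    Measurable fun u : ℝ => eraseCut ν (ENNReal.ofReal u) :=
  (eraseCut_antitone ν).measurable.comp ENNReal.measurable_ofReal

/-- Quantile representation of the erased measure: `k_r ν` is the image of Lebesgue measure on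
`(r, ν E]` under the map sending an erased mass to the corresponding cut point. -/
lemma eraseMass_eq_map (ν : Measure ℝ≥0∞) [IsFiniteMeasure ν] {r : ℝ} (hr : 0 ≤ r) :
    eraseMass (ENNReal.ofReal r) ν =
      (volume.restrict (Ioc r (ν univ).toReal)).map
        (fun u => eraseCut ν (ENNReal.ofReal u)) := by
  have : IsFiniteMeasure (eraseMass (ENNReal.ofReal r) ν) :=
    ⟨by rw [eraseMass_univ]; exact tsub_le_self.trans_lt (measure_lt_top _ _)⟩
  refine Measure.ext_of_Iic _ _ fun s => ?_
  rw [eraseMass_Iic, Measure.map_apply (measurable_eraseCut_ofReal ν) measurableSet_Iic,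
    Measure.restrict_apply (measurable_eraseCut_ofReal ν measurableSet_Iic)]
  set M := (ν univ).toReal with hM
  set F := (ν (Iic s)).toReal with hF
  have hMe : ν univ = ENNReal.ofReal M := (ENNReal.ofReal_toReal (measure_ne_top _ _)).symm
  have hFe : ν (Iic s) = ENNReal.ofReal F := (ENNReal.ofReal_toReal (measure_ne_top _ _)).symm
  have hF0 : 0 ≤ F := ENNReal.toReal_nonneg
  have hFM : F ≤ M := ENNReal.toReal_mono (measure_ne_top _ _) (measure_mono (subset_univ _))
  have hset : (fun u : ℝ => eraseCut ν (ENNReal.ofReal u)) ⁻¹' Iic s ∩ Ioc r M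
      = Ioc r M ∩ Ici (M - F) := by
    ext u
    simp only [mem_inter_iff, mem_preimage, mem_Iic, mem_Ioc, mem_Ici, eraseCut_le_iff]
    rw [and_comm]
    refine and_congr_right fun hu => ?_
    rw [hMe, hFe, ← ENNReal.ofReal_sub _ (hr.trans hu.1.le), ENNReal.ofReal_le_ofReal_iff hF0]
    constructor <;> intro h <;> linarith
  rw [hset, hMe, hFe, ← ENNReal.ofReal_sub _ hr, ← ENNReal.ofReal_min]
  rcases lt_or_ge r (M - F) with h | h
  · have : Ioc r M ∩ Ici (M - F) = Icc (M - F) M := by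
      ext u; simp only [mem_inter_iff, mem_Ioc, mem_Ici, mem_Icc]; grind
    rw [this, Real.volume_Icc, min_eq_left (by linarith)]
    congr 1; ring
  · have : Ioc r M ∩ Ici (M - F) = Ioc r M := by
      ext u; simp only [mem_inter_iff, mem_Ioc, mem_Ici]; grind
    rw [this, Real.volume_Ioc, min_eq_right (by linarith)]

/-- The height of the erased measure is its cut point. When all the mass is erased both are `0`. -/
lemma Hr_eq_eraseCut (ν : Measure ℝ≥0∞) [IsFiniteMeasure ν] (a : ℝ≥0∞) :
    Hr ν a = eraseCut ν a := by
  set c := eraseCut ν a with hc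
  rcases eq_or_ne (ν univ - a) 0 with h0 | h0
  · have hc0 : c = 0 := le_antisymm ((eraseCut_le_iff ν a 0).2 (by simp [h0])) bot_le
    have hm : eraseMass a ν = 0 := by
      rw [← Measure.measure_univ_eq_zero, eraseMass_univ, h0]
    rw [hc0, Hr, mH, hm]
    refine le_antisymm (sSup_le fun x hx => ?_) bot_le
    simpa using hx univ isOpen_univ (mem_univ _)
  rw [Hr, mH]
  refine le_antisymm (sSup_le fun x hx => ?_) (le_sSup fun U hU hcU => ?_)
  · by_contra! hlt
    refine (hx (Ioi c) isOpen_Ioi hlt).ne' ?_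
    rw [eraseMass, Measure.add_apply, Measure.restrict_apply measurableSet_Ioi,
      Measure.smul_apply, Measure.dirac_apply' _ measurableSet_Ioi, ← hc,
      indicator_of_notMem (by simp)]
    have : Ioi c ∩ Iio c = ∅ := by ext y; simp; exact fun h => le_of_lt h
    simp [this]
  · have hcI : eraseMass a ν (Iic c) = ν univ - a := by
      rw [eraseMass_Iic, min_eq_right (le_measure_Iic_eraseCut ν a)]
    rcases eq_or_ne c 0 with h | h
    · have hsub : Iic c ⊆ U := fun y hy => by
        have : y = c := le_antisymm hy (h ▸ bot_le)
        exact this ▸ hcU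
      exact (pos_iff_ne_zero.2 h0).trans_le (hcI ▸ measure_mono hsub)
    · obtain ⟨s, hs, hsU⟩ := exists_Ioc_subset_of_mem_nhds (hU.mem_nhds hcU)
        ⟨0, pos_iff_ne_zero.2 h⟩
      have hsF : ν (Iic s) < ν univ - a :=
        not_le.1 fun hle => hs.not_ge ((eraseCut_le_iff ν a s).2 hle)
      have hcov : Iic c ⊆ Iic s ∪ U := fun y hy => by
        rcases le_or_gt y s with hys | hys
        · exact Or.inl hys
        · exact Or.inr (hsU ⟨hys, hy⟩)
      by_contra hU0
      have hle : eraseMass a ν (Iic c) ≤ eraseMass a ν (Iic s) + eraseMass a ν U :=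
        (measure_mono hcov).trans (measure_union_le _ _)
      rw [hcI, eraseMass_Iic, nonpos_iff_eq_zero.1 (not_lt.1 hU0), add_zero] at hle
      exact (hle.trans (min_le_left _ _)).not_gt hsF

/-- The identity `∫₀ᴹ e^{-P} P' = 1 - e^{-P(M)}` for the primitive `P` of a bounded measurable
function `h`. Since `h` need not be continuous, `P` is only Lipschitz, and the fundamental theorem
of calculus for absolutely continuous functions is used. -/
lemma integral_exp_neg_primitive_mul {h : ℝ → ℝ} (hm : Measurable h) {C : ℝ}
    (hC : ∀ x, |h x| ≤ C) (M : ℝ) :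
    ∫ r in (0:ℝ)..M, Real.exp (-∫ u in (0:ℝ)..r, h u) * h r
      = 1 - Real.exp (-∫ u in (0:ℝ)..M, h u) := by
  have hC0 : 0 ≤ C := (abs_nonneg _).trans (hC 0)
  have hint : ∀ a b : ℝ, IntervalIntegrable h volume a b := fun a b =>
    (intervalIntegrable_const (c := C)).mono_fun hm.aestronglyMeasurable
      (Eventually.of_forall fun x => by
        simpa [abs_of_nonneg hC0] using hC x)
  set P : ℝ → ℝ := fun r => ∫ u in (0:ℝ)..r, h u with hP
  have hPl : LipschitzWith C.toNNReal P := by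
    refine LipschitzWith.of_dist_le_mul fun x y => ?_
    rw [Real.dist_eq, Real.dist_eq, Real.coe_toNNReal _ hC0, hP]
    simp only
    rw [intervalIntegral.integral_interval_sub_left (hint _ _) (hint _ _)]
    exact intervalIntegral.norm_integral_le_of_norm_le_const (f := h) (C := C) fun u _ => hC u
  have hcpt : IsCompact ((fun r => -P r) '' uIcc 0 M) :=
    isCompact_uIcc.image hPl.continuous.neg
  obtain ⟨R, hR⟩ := hcpt.isBounded.subset_closedBall 0
  obtain ⟨K, hK⟩ := (Real.contDiff_exp (n := 1)).contDiffOn.exists_lipschitzOnWith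
    (s := Metric.closedBall (0:ℝ) R) (by decide) (convex_closedBall _ _)
    (isCompact_closedBall _ _)
  have hG : LipschitzOnWith (K * C.toNNReal) (fun r => Real.exp (-P r)) (uIcc 0 M) :=
    hK.comp (hPl.neg.lipschitzOnWith) fun r hr => hR (mem_image_of_mem _ hr)
  have hftc := hG.absolutelyContinuousOnInterval.integral_deriv_eq_sub
  have hae : ∀ᵐ r, r ∈ uIoc 0 M →
      Real.exp (-P r) * h r = - deriv (fun r => Real.exp (-P r)) r := by
    filter_upwards [(hint 0 M).ae_hasDerivAt_integral] with r hr hrm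
    have hd : HasDerivAt P (h r) r := hr (uIoc_subset_uIcc hrm) 0 left_mem_uIcc
    have hd' : HasDerivAt (fun r => Real.exp (-P r)) (Real.exp (-P r) * -h r) r := hd.neg.exp
    rw [hd'.deriv]; ring
  rw [intervalIntegral.integral_congr_ae hae, intervalIntegral.integral_neg, hftc]
  simp [hP]

/-- For every finite Borel measure `μ` on `E = [0,∞]`, `γ > 0` and bounded
nonnegative Borel measurable `f : E → [0,∞)`,
`∫₀^∞ e^{-γ r - ⟨k_r μ, f⟩} (γ - f(H^μ_r)) dr = e^{-⟨μ,f⟩} - (f(0)/γ) e^{-γ ⟨μ,1⟩}`. -/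
theorem resolvent_integral_eq (μ : Measure ℝ≥0∞) [IsFiniteMeasure μ]
    (γ : ℝ) (hγ : 0 < γ)
    (f : ℝ≥0∞ → ℝ) (hfm : Measurable f) (hf0 : ∀ x, 0 ≤ f x) (hfb : ∃ C, ∀ x, f x ≤ C) :
    ∫ r in Set.Ioi (0:ℝ),
        Real.exp (-(γ * r) - ∫ x, f x ∂(eraseMass (ENNReal.ofReal r) μ)) *
          (γ - f (Hr μ (ENNReal.ofReal r)))
      = Real.exp (-∫ x, f x ∂μ) - (f 0 / γ) * Real.exp (-(γ * (μ Set.univ).toReal)) := by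
  obtain ⟨C, hC⟩ := hfb
  set M := (μ univ).toReal with hM
  have hM0 : 0 ≤ M := ENNReal.toReal_nonneg
  set g : ℝ → ℝ := fun u => f (eraseCut μ (ENNReal.ofReal u)) with hg
  have hgm : Measurable g := hfm.comp (measurable_eraseCut_ofReal μ)
  have hgC : ∀ u, |g u| ≤ C := fun u => by rw [abs_of_nonneg (hf0 _)]; exact hC _
  have hgi : ∀ a b : ℝ, IntervalIntegrable g volume a b := fun a b =>
    (intervalIntegrable_const (c := C)).mono_fun hgm.aestronglyMeasurable
      (Eventually.of_forall fun x => by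
        simpa [abs_of_nonneg ((abs_nonneg _).trans (hgC 0))] using hgC x)
  have hA : ∀ r, 0 ≤ r → ∫ x, f x ∂(eraseMass (ENNReal.ofReal r) μ) = ∫ u in Ioc r M, g u :=
    fun r hr => by
      rw [eraseMass_eq_map μ hr, integral_map (measurable_eraseCut_ofReal μ).aemeasurable
        hfm.aestronglyMeasurable]
  have hμ : ∫ x, f x ∂μ = ∫ u in (0:ℝ)..M, g u := by
    have h0 : eraseMass (ENNReal.ofReal 0) μ = μ := by
      have : IsFiniteMeasure (eraseMass (ENNReal.ofReal 0) μ) :=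
        ⟨by rw [eraseMass_univ]; exact tsub_le_self.trans_lt (measure_lt_top _ _)⟩
      refine Measure.ext_of_Iic _ _ fun s => ?_
      rw [eraseMass_Iic, ENNReal.ofReal_zero, tsub_zero, min_eq_left (measure_mono (subset_univ _))]
    rw [intervalIntegral.integral_of_le hM0, ← hA 0 le_rfl, h0]
  set S := ∫ x, f x ∂μ with hS
  simp only [Hr_eq_eraseCut]
  -- Before the total mass is exhausted the integrand is `e^{-⟨μ,f⟩} e^{-P} P'` with `P' = γ - g`.
  have hE1 : EqOn (fun r => Real.exp (-(γ * r) - ∫ x, f x ∂(eraseMass (ENNReal.ofReal r) μ)) *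
          (γ - f (eraseCut μ (ENNReal.ofReal r))))
      (fun r => Real.exp (-S) * (Real.exp (-∫ u in (0:ℝ)..r, (γ - g u)) * (γ - g r)))
      (Ioc 0 M) := fun r hr => by
    simp only
    rw [hA r hr.1.le, ← intervalIntegral.integral_of_le hr.2,
      intervalIntegral.integral_sub intervalIntegrable_const (hgi _ _), ← mul_assoc,
      ← Real.exp_add, hμ, ← intervalIntegral.integral_add_adjacent_intervals (hgi 0 r) (hgi r M),
      intervalIntegral.integral_const]
    congr 2
    simp only [smul_eq_mul]; ring
  -- Afterwards the erased measure vanishes and the cut point is `0`.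
  have hE2 : EqOn (fun r => Real.exp (-(γ * r) - ∫ x, f x ∂(eraseMass (ENNReal.ofReal r) μ)) *
          (γ - f (eraseCut μ (ENNReal.ofReal r))))
      (fun r => Real.exp (-γ * r) * (γ - f 0)) (Ioi M) := fun r hr => by
    have hr' : M < r := hr
    have hc : eraseCut μ (ENNReal.ofReal r) = 0 := by
      refine le_antisymm ((eraseCut_le_iff μ _ 0).2 ?_) bot_le
      rw [tsub_eq_zero_of_le]
      · exact bot_le
      · exact ENNReal.le_ofReal_iff_toReal_le (measure_ne_top _ _) (hM0.trans hr'.le) |>.2 hr'.le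
    simp only
    rw [hA r (hM0.trans hr'.le), Ioc_eq_empty (not_lt.2 hr'.le), hc]
    simp
  have hhC : ∀ u, |γ - g u| ≤ |γ| + C := fun u => (abs_sub _ _).trans (by gcongr; exact hgC u)
  have hhm : Measurable fun u => γ - g u := measurable_const.sub hgm
  have hhi : ∀ a b : ℝ, IntervalIntegrable (fun u => γ - g u) volume a b :=
    fun a b => intervalIntegrable_const.sub (hgi a b)
  have hI1 : IntegrableOn
      (fun r => Real.exp (-S) * (Real.exp (-∫ u in (0:ℝ)..r, (γ - g u)) * (γ - g r)))
      (Ioc 0 M) := by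
    refine Integrable.const_mul ?_ _
    refine (intervalIntegrable_iff_integrableOn_Ioc_of_le hM0).1
      ((hhi 0 M).continuousOn_mul ?_)
    exact (Real.continuous_exp.comp
      (intervalIntegral.continuous_primitive hhi 0).neg).continuousOn
  have hI2 : IntegrableOn (fun r => Real.exp (-γ * r) * (γ - f 0)) (Ioi M) :=
    (integrableOn_exp_mul_Ioi (by linarith) M).mul_const _
  rw [← Ioc_union_Ioi_eq_Ioi hM0, setIntegral_union (Ioc_disjoint_Ioi le_rfl) measurableSet_Ioi
    (hI1.congr_fun hE1.symm measurableSet_Ioc) (hI2.congr_fun hE2.symm measurableSet_Ioi),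
    setIntegral_congr_fun measurableSet_Ioc hE1, setIntegral_congr_fun measurableSet_Ioi hE2,
    integral_const_mul, ← intervalIntegral.integral_of_le hM0,
    integral_exp_neg_primitive_mul hhm hhC, integral_mul_const, integral_exp_mul_Ioi (by linarith),
    intervalIntegral.integral_sub intervalIntegrable_const (hgi _ _), ← hμ, mul_sub,
    ← Real.exp_add, intervalIntegral.integral_const]
  have e1 : -S + -((M - 0) • γ - S) = -(γ * M) := by simp only [smul_eq_mul]; ring
  rw [e1, neg_mul]
  field_simp
  ring
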